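/- Compactness of minimizers (convergence of indicators and gradients): let Ω ⊆ ℝⁿ be open and let (u_k) be a sequence of minimizers of J in Ω which is locally uniformly Lipschitz (for every compact K ⊆ ℝⁿ there is L such that every u_k is L-Lipschitz on K) and converges pointwise to a function u. Then: (a) for every compact K ⊆ Ω, ∫_K |𝟙_{{u_k>0}} − 𝟙_{{u>0}}| dx → 0 as k → ∞; and (b) ∇u_k(x) → ∇u(x) for almost every x ∈ Ω. -/

import Mathlib

/-!
Comparing a minimizer `u` on a ball with its minimum with a cone bounds the measure of `{u > 0}` on
the half ball; together with the Lipschitz bound the estimate can be iterated and gives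
nondegeneracy: there is `δ > 0`, depending only on the dimension and the Lipschitz constant, such
that `u ≤ δ r` on the ball of radius `r` about `y` forces `u y = 0`.

By Rademacher's theorem the limit `v` is differentiable almost everywhere. If `v x = 0` at such a
point, then `x` is a minimum and `∇ v x = 0`, so for large `k` the function `u k` is at most `δ r`
on small balls around the points near `x`, hence vanishes near `x`. If `v x > 0`, then for large
`k` the function `u k` is positive, hence weakly harmonic, near `x`, where it equals its convolution
with a radial mollifier; the gradient can be moved onto the mollifier, so uniform convergence of
`u k` implies convergence of the gradients. Dominated convergence handles the indicators.
-/

open MeasureTheory Metric Set Filter ENNReal NNReal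

/-- The Alt–Caffarelli energy `J_D(u) = ∫_D (‖∇u‖² + 𝟙_{u>0})`, valued in `[0,∞]`. -/
noncomputable def JE {n : ℕ} (D : Set (EuclideanSpace ℝ (Fin n)))
    (u : EuclideanSpace ℝ (Fin n) → ℝ) : ℝ≥0∞ :=
  ∫⁻ x in D, ((‖gradient u x‖₊ : ℝ≥0∞) ^ 2 + if 0 < u x then 1 else 0)

/-- `u` is a (nonnegative, locally Lipschitz) minimizer of `J` in the open set `Ω`:
for every nonnegative locally Lipschitz competitor `v` with `{v ≠ u}` a bounded subset
of `Ω`, one has `J_{Ω ∩ B}(u) ≤ J_{Ω ∩ B}(v)` for every open ball `B ⊇ {v ≠ u}`. -/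
def IsMinimizer {n : ℕ} (Ω : Set (EuclideanSpace ℝ (Fin n)))
    (u : EuclideanSpace ℝ (Fin n) → ℝ) : Prop :=
  (∀ x, 0 ≤ u x) ∧ LocallyLipschitz u ∧
  ∀ v : EuclideanSpace ℝ (Fin n) → ℝ, (∀ x, 0 ≤ v x) → LocallyLipschitz v →
    Bornology.IsBounded {x | v x ≠ u x} → {x | v x ≠ u x} ⊆ Ω →
    ∀ (c : EuclideanSpace ℝ (Fin n)) (r : ℝ), {x | v x ≠ u x} ⊆ Metric.ball c r →
      JE (Ω ∩ Metric.ball c r) u ≤ JE (Ω ∩ Metric.ball c r) v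

open scoped Topology Gradient Convolution RealInnerProductSpace

section GeneralLemmas

lemma tendstoUniformlyOn_of_lipschitzOnWith {ι α β : Type*} [PseudoMetricSpace α]
    [PseudoMetricSpace β] {l : Filter ι} {u : ι → α → β} {v : α → β} {K : Set α} {L : ℝ≥0}
    (hK : IsCompact K) (hL : ∀ i, LipschitzOnWith L (u i) K)
    (hconv : ∀ x ∈ K, Tendsto (u · x) l (𝓝 (v x))) : TendstoUniformlyOn u v l K := by
  have hequi : EquicontinuousOn u K :=
    (LipschitzOnWith.uniformEquicontinuousOn u L hL).equicontinuousOn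
  have := (EquicontinuousOn.tendsto_uniformOnFun_iff_pi' (𝔖 := {K}) (by simpa using hK)
    (by simpa using hequi) l v).2 (tendsto_pi_nhds.2 fun x => hconv x (by simpa using x.2))
  exact UniformOnFun.tendsto_iff_tendstoUniformlyOn.1 this K rfl

lemma tendsto_integral_smul_of_tendstoUniformlyOn {α G : Type*} [TopologicalSpace α]
    [MeasurableSpace α] [OpensMeasurableSpace α] [SecondCountableTopology α]
    {μ : Measure α} [IsFiniteMeasureOnCompacts μ]
    [NormedAddCommGroup G] [NormedSpace ℝ G] {u : ℕ → α → ℝ} {v : α → ℝ} {K : Set α} {h : α → G}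
    (hu : ∀ k, Continuous (u k)) (hv : Continuous v) (huv : TendstoUniformlyOn u v atTop K)
    (hh : Continuous h) (hc : HasCompactSupport h) (hK : tsupport h ⊆ K) :
    Tendsto (fun k => ∫ x, u k x • h x ∂μ) atTop (𝓝 (∫ x, v x • h x ∂μ)) := by
  have hzero : ∀ x ∉ K, h x = 0 := fun x hx => image_eq_zero_of_notMem_tsupport fun h => hx (hK h)
  refine tendsto_integral_filter_of_dominated_convergence (fun x => (|v x| + 1) * ‖h x‖)
    (.of_forall fun k => ?_) ?_ ?_ (.of_forall fun x => ?_)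
  · exact ((hu k).smul hh).aestronglyMeasurable
  · filter_upwards [Metric.tendstoUniformlyOn_iff.1 huv 1 one_pos] with k hk
    refine .of_forall fun x => ?_
    by_cases hx : x ∈ K
    · rw [norm_smul]
      gcongr
      have hdist : |v x - u k x| < 1 := hk x hx
      have := abs_sub_abs_le_abs_sub (u k x) (v x)
      rw [abs_sub_comm] at this
      rw [Real.norm_eq_abs]
      linarith
    · simp [hzero x hx]
  · exact Continuous.integrable_of_hasCompactSupport (by fun_prop) hc.norm.mul_left
  · by_cases hx : x ∈ K
    · exact (huv.tendsto_at hx).smul_const _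
    · simp [hzero x hx]

lemma tendsto_setIntegral_abs_pos_sub_pos {α : Type*} [MeasurableSpace α] {μ : Measure α}
    {K : Set α} (hK : μ K ≠ ∞) {u : ℕ → α → ℝ} {v : α → ℝ}
    (hu : ∀ k, AEMeasurable (u k) (μ.restrict K)) (hv : AEMeasurable v (μ.restrict K))
    (huv : ∀ᵐ x ∂μ.restrict K, ∀ᶠ k in atTop, 0 < u k x ↔ 0 < v x) :
    Tendsto (fun k => ∫ x in K,
      |(if 0 < u k x then (1 : ℝ) else 0) - (if 0 < v x then (1 : ℝ) else 0)| ∂μ)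
      atTop (𝓝 0) := by
  have hmeas : Measurable fun a : ℝ => if 0 < a then (1 : ℝ) else 0 :=
    Measurable.ite measurableSet_Ioi measurable_const measurable_const
  suffices h : Tendsto (fun k => ∫ x in K,
      |(if 0 < u k x then (1 : ℝ) else 0) - (if 0 < v x then (1 : ℝ) else 0)| ∂μ)
      atTop (𝓝 (∫ _ in K, (0 : ℝ) ∂μ)) by rwa [integral_zero] at h
  refine tendsto_integral_of_dominated_convergence (fun _ => (1 : ℝ)) (fun k => ?_)
    (integrableOn_const hK) (fun k => .of_forall fun x => ?_) ?_
  · exact (continuous_abs.measurable.comp_aemeasurable ((hmeas.comp_aemeasurable (hu k)).sub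
      (hmeas.comp_aemeasurable hv))).aestronglyMeasurable
  · split_ifs <;> simp
  · filter_upwards [huv] with x hx
    refine tendsto_const_nhds.congr' ?_
    filter_upwards [hx] with k hk
    simp [hk]

lemma exists_lipschitzOnWith_comp_add_smul {E : Type*} [NormedAddCommGroup E]
    [NormedSpace ℝ E] {u k : E → ℝ} (hu : LocallyLipschitz u)
    (hk : HasCompactSupport k) (z : E) {I : Set ℝ} (hI : IsCompact I) :
    ∃ C : ℝ, ∀ y, LipschitzOnWith (Real.nnabs (C * ‖k y‖)) (fun a => u (z + a • y) * k y) I := by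
  have hK : IsCompact ((fun p : ℝ × E => z + p.1 • p.2) '' I ×ˢ tsupport k) :=
    (hI.prod hk.isCompact).image (by fun_prop)
  obtain ⟨L, hL⟩ := hu.locallyLipschitzOn.exists_lipschitzOnWith_of_compact hK
  obtain ⟨R, hR⟩ := hk.isCompact.isBounded.exists_norm_le
  refine ⟨L * R, fun y => .of_dist_le_mul fun a ha b hb => ?_⟩
  by_cases hy : y ∈ tsupport k
  · have hdist : dist (u (z + a • y)) (u (z + b • y)) ≤ L * (dist a b * ‖y‖) := by
      simpa only [dist_add_left, dist_eq_norm (a • y), ← sub_smul, norm_smul, ← dist_eq_norm a b]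
        using hL.dist_le_mul _ ⟨(a, y), ⟨ha, hy⟩, rfl⟩ _ ⟨(b, y), ⟨hb, hy⟩, rfl⟩
    calc dist (u (z + a • y) * k y) (u (z + b • y) * k y)
        = dist (u (z + a • y)) (u (z + b • y)) * ‖k y‖ := by
          rw [Real.dist_eq, ← sub_mul, abs_mul, Real.dist_eq, Real.norm_eq_abs]
      _ ≤ L * (dist a b * R) * ‖k y‖ := by
          gcongr
          exact hdist.trans (by gcongr; exact hR y hy)
      _ = L * R * ‖k y‖ * dist a b := by ring
      _ ≤ Real.nnabs (L * R * ‖k y‖) * dist a b := by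
          gcongr
          exact le_abs_self _
  · simp [image_eq_zero_of_notMem_tsupport hy]

lemma eq_zero_of_eventually_nonneg_quadratic {b d : ℝ}
    (h : ∀ᶠ s : ℝ in 𝓝 0, 0 ≤ 2 * s * b + s ^ 2 * d) : b = 0 := by
  have hmin : IsLocalMin (fun s : ℝ => 2 * s * b + s ^ 2 * d) 0 := by
    simpa [IsLocalMin, IsMinFilter]
  have hderiv : HasDerivAt (fun s : ℝ => 2 * s * b + s ^ 2 * d) (2 * b) 0 := by
    simpa using (((hasDerivAt_id (0 : ℝ)).const_mul 2).mul_const b).fun_add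
      ((hasDerivAt_pow 2 (0 : ℝ)).mul_const d)
  linarith [hmin.hasDerivAt_eq_zero hderiv]

lemma exists_pos_le_four_mul_sq_lt {a b : ℝ} (ha : 0 < a) (hb : 0 < b) :
    ∃ ε : ℝ, 0 < ε ∧ ε ≤ a ∧ 4 * ε ^ 2 < b := by
  have hlim : Tendsto (fun ε : ℝ => 4 * ε ^ 2) (𝓝[>] 0) (𝓝 0) := by
    have : Continuous fun ε : ℝ => 4 * ε ^ 2 := by fun_prop
    simpa using (this.tendsto 0).mono_left nhdsWithin_le_nhds
  obtain ⟨ε, hε, hεb⟩ := ((hlim.eventually_lt_const hb).and (Ioc_mem_nhdsGT ha)).exists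
  exact ⟨ε, hεb.1, hεb.2, hε⟩

lemma hasDerivAt_max_zero_pow (m : ℕ) (s : ℝ) :
    HasDerivAt (fun s : ℝ => max s 0 ^ (m + 2)) ((m + 2) * max s 0 ^ (m + 1)) s := by
  rcases lt_trichotomy s 0 with hs | rfl | hs
  · have : (fun s : ℝ => max s 0 ^ (m + 2)) =ᶠ[𝓝 s] fun _ => 0 := by
      filter_upwards [gt_mem_nhds hs] with a ha
      simp [max_eq_right ha.le]
    simpa [max_eq_right hs.le] using (hasDerivAt_const s (0 : ℝ)).congr_of_eventuallyEq this
  · have hO : (fun s : ℝ => max s 0 ^ (m + 2)) =O[𝓝 0] fun s : ℝ => ‖s - 0‖ ^ (m + 2) := by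
      refine .of_bound 1 (.of_forall fun a => ?_)
      simp only [sub_zero, norm_pow, norm_norm, one_mul]
      gcongr
      simpa only [Real.norm_eq_abs, abs_of_nonneg (le_max_right a 0)] using
        max_le (le_abs_self a) (abs_nonneg a)
    simpa using (hO.hasFDerivAt (𝕜 := ℝ) (by lia)).hasDerivAt
  · have : (fun s : ℝ => max s 0 ^ (m + 2)) =ᶠ[𝓝 s] fun s => s ^ (m + 2) := by
      filter_upwards [lt_mem_nhds hs] with a ha
      rw [max_eq_left ha.le]
    simpa [max_eq_left hs.le] using (hasDerivAt_pow (m + 2) s).congr_of_eventuallyEq this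

lemma contDiff_max_zero_pow (m : ℕ) : ContDiff ℝ 1 fun s : ℝ => max s 0 ^ (m + 2) := by
  rw [contDiff_one_iff_deriv, funext fun s => (hasDerivAt_max_zero_pow m s).deriv]
  exact ⟨fun s => (hasDerivAt_max_zero_pow m s).differentiableAt, by fun_prop⟩

lemma ae_differentiableAt_of_locallyLipschitzOn {E F : Type*} [NormedAddCommGroup E]
    [NormedSpace ℝ E] [FiniteDimensional ℝ E] [MeasurableSpace E] [BorelSpace E]
    {μ : Measure E} [μ.IsAddHaarMeasure] [NormedAddCommGroup F] [NormedSpace ℝ F]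
    [FiniteDimensional ℝ F] {U : Set E} (hU : IsOpen U) {f : E → F} (hf : LocallyLipschitzOn U f) :
    ∀ᵐ x ∂μ, x ∈ U → DifferentiableAt ℝ f x := by
  refine measure_null_of_locally_null _ fun x hx => ?_
  obtain ⟨hxU, -⟩ : x ∈ U ∧ ¬ DifferentiableAt ℝ f x := by simpa using hx
  obtain ⟨L, s, hs, hL⟩ := hf hxU
  rw [hU.nhdsWithin_eq hxU] at hs
  refine ⟨interior s ∩ {y | ¬(y ∈ U → DifferentiableAt ℝ f y)},
    inter_mem (mem_nhdsWithin_of_mem_nhds (interior_mem_nhds.2 hs)) self_mem_nhdsWithin, ?_⟩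
  refine measure_mono_null (fun y hy => ?_) hL.ae_differentiableWithinAt_of_mem
  simp only [mem_compl_iff, mem_ofPred_eq, Classical.not_imp] at hy ⊢
  exact ⟨interior_subset hy.1, fun h =>
    hy.2.2 (h.differentiableAt (mem_interior_iff_mem_nhds.1 hy.1))⟩

end GeneralLemmas

section Gradient

variable {E : Type*} [NormedAddCommGroup E] [InnerProductSpace ℝ E] [CompleteSpace E]

lemma norm_gradient (f : E → ℝ) (x : E) : ‖∇ f x‖ = ‖fderiv ℝ f x‖ := by
  rw [← toDual_gradient, LinearIsometryEquiv.norm_map]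

lemma norm_gradient_le_of_le_of_eq {f u : E → ℝ} {x : E} (hle : ∀ y, f y ≤ u y)
    (heq : f x = u x) (hu : DifferentiableAt ℝ u x) : ‖∇ f x‖ ≤ ‖∇ u x‖ := by
  by_cases hf : DifferentiableAt ℝ f x
  · have hmin : IsLocalMin (fun y => u y - f y) x :=
      .of_forall fun y => by simpa [heq] using hle y
    have hfderiv := hmin.fderiv_eq_zero
    rw [fderiv_fun_sub hu hf, sub_eq_zero] at hfderiv
    rw [norm_gradient, norm_gradient, hfderiv]
  · rw [gradient_eq_zero_of_not_differentiableAt hf, norm_zero]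
    exact norm_nonneg _

lemma measurable_gradient [MeasurableSpace E] [BorelSpace E] (f : E → ℝ) :
    Measurable (∇ f) :=
  (InnerProductSpace.toDual ℝ E).symm.continuous.measurable.comp (measurable_fderiv ℝ f)

end Gradient

section Integrability

variable {E : Type*} [NormedAddCommGroup E] [InnerProductSpace ℝ E] [FiniteDimensional ℝ E]
  {f g : E → ℝ} {D : Set E}

lemma exists_norm_gradient_le_of_isBounded (hf : LocallyLipschitz f) (hD : Bornology.IsBounded D) :
    ∃ C : ℝ, ∀ x ∈ D, ‖∇ f x‖ ≤ C := by
  obtain ⟨r, hr⟩ := hD.subset_ball 0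
  obtain ⟨L, hL⟩ := hf.locallyLipschitzOn.exists_lipschitzOnWith_of_compact
    (isCompact_closedBall (0 : E) r)
  refine ⟨L, fun x hx => ?_⟩
  rw [norm_gradient]
  exact norm_fderiv_le_of_lipschitzOn ℝ (isOpen_ball.mem_nhds (hr hx))
    (hL.mono ball_subset_closedBall)

lemma integrableOn_inner_gradient [MeasurableSpace E] [BorelSpace E] {μ : Measure E}
    [IsFiniteMeasureOnCompacts μ] (hf : LocallyLipschitz f) (hg : LocallyLipschitz g)
    (hD : Bornology.IsBounded D) : IntegrableOn (fun x => ⟪∇ f x, ∇ g x⟫) D μ := by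
  obtain ⟨r, hr⟩ := hD.subset_ball 0
  obtain ⟨C, hC⟩ := exists_norm_gradient_le_of_isBounded hf (isBounded_ball (x := (0 : E)) (r := r))
  obtain ⟨C', hC'⟩ :=
    exists_norm_gradient_le_of_isBounded hg (isBounded_ball (x := (0 : E)) (r := r))
  refine IntegrableOn.mono_set ?_ hr
  refine Measure.integrableOn_of_bounded (M := C * C') measure_ball_lt_top.ne
    ((measurable_gradient f).inner (measurable_gradient g)).aestronglyMeasurable ?_
  filter_upwards [ae_restrict_mem measurableSet_ball] with x hx
  calc ‖⟪∇ f x, ∇ g x⟫‖ ≤ ‖∇ f x‖ * ‖∇ g x‖ := norm_inner_le_norm _ _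
    _ ≤ C * C' :=
      mul_le_mul (hC x hx) (hC' x hx) (norm_nonneg _) ((norm_nonneg _).trans (hC x hx))

end Integrability

section RadialKernel

/-- The compactly supported radial kernels `(1 - ‖y‖²)₊ ^ m`, of class `C¹` for `m ≥ 2`. The
gradient of the kernel of exponent `m + 1` is a multiple of `y` times the kernel of exponent `m`,
so the former is the test function that differentiates averages against the latter. -/
noncomputable def radialBump {E : Type*} [NormedAddCommGroup E] (m : ℕ) (y : E) : ℝ :=
  max (1 - ‖y‖ ^ 2) 0 ^ m

lemma radialBump_eq_zero {E : Type*} [NormedAddCommGroup E] {m : ℕ} (hm : m ≠ 0) {y : E}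
    (hy : 1 ≤ ‖y‖) : radialBump m y = 0 := by
  rw [radialBump, max_eq_right (by nlinarith), zero_pow hm]

lemma radialBump_neg {E : Type*} [NormedAddCommGroup E] (m : ℕ) (y : E) :
    radialBump m (-y) = radialBump m y := by
  rw [radialBump, norm_neg, radialBump]

lemma hasCompactSupport_radialBump {E : Type*} [NormedAddCommGroup E] [ProperSpace E]
    {m : ℕ} (hm : m ≠ 0) : HasCompactSupport (radialBump m : E → ℝ) :=
  .intro (isCompact_closedBall 0 1) fun y hy => radialBump_eq_zero hm <| by
    simpa using (not_le.1 fun h => hy (mem_closedBall_zero_iff.2 h)).le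

variable {E : Type*} [NormedAddCommGroup E] [InnerProductSpace ℝ E]

lemma contDiff_radialBump (m : ℕ) : ContDiff ℝ 1 (radialBump (m + 2) : E → ℝ) :=
  (contDiff_max_zero_pow m).comp (contDiff_const.sub (contDiff_norm_sq ℝ))

lemma hasFDerivAt_radialBump (m : ℕ) (y : E) :
    HasFDerivAt (radialBump (m + 2)) (-(2 * (m + 2) * radialBump (m + 1) y) • innerSL ℝ y) y := by
  have hnorm : HasFDerivAt (fun y : E => 1 - ‖y‖ ^ 2) (-(2 • innerSL ℝ y)) y :=
    (hasStrictFDerivAt_norm_sq y).hasFDerivAt.const_sub 1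
  refine ((hasDerivAt_max_zero_pow m _).comp_hasFDerivAt y hnorm).congr_fderiv ?_
  ext h
  simp only [radialBump, smul_neg, neg_smul, _root_.neg_apply, _root_.smul_apply,
    coe_innerSL_apply, nsmul_eq_mul, Nat.cast_ofNat, smul_eq_mul, neg_inj]
  ring

lemma tsupport_radialBump_comp_subset {m : ℕ} (hm : m ≠ 0) (z : E) {t : ℝ} (ht : 0 < t) :
    tsupport (fun w => radialBump m (t⁻¹ • (w - z))) ⊆ closedBall z t := by
  refine closure_minimal (fun w hw => mem_closedBall.2 <| not_lt.1 fun hlt =>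
    hw (radialBump_eq_zero hm ?_)) isClosed_closedBall
  rw [norm_smul, norm_inv, Real.norm_of_nonneg ht.le, ← dist_eq_norm, inv_mul_eq_div, one_le_div ht]
  exact hlt.le

lemma gradient_radialBump_comp [CompleteSpace E] (m : ℕ) (z w : E) (t : ℝ) :
    ∇ (fun w => radialBump (m + 2) (t⁻¹ • (w - z))) w =
      (-(2 * (m + 2) * radialBump (m + 1) (t⁻¹ • (w - z))) * t⁻¹ ^ 2) • (w - z) := by
  refine HasGradientAt.gradient (hasGradientAt_iff_hasFDerivAt.2 ?_)
  have hscale : HasFDerivAt (fun w : E => t⁻¹ • (w - z)) (t⁻¹ • ContinuousLinearMap.id ℝ E) w :=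
    ((hasFDerivAt_id w).sub_const z).const_smul t⁻¹
  refine ((hasFDerivAt_radialBump m _).comp w hscale).congr_fderiv ?_
  ext h
  simp only [map_smul, map_sub, neg_smul, ContinuousLinearMap.comp_smulₛₗ, map_inv₀,
    Real.ringHom_apply, ContinuousLinearMap.comp_id, smul_neg, _root_.neg_apply,
    _root_.smul_apply, _root_.sub_apply, coe_innerSL_apply, smul_eq_mul, inv_pow, neg_mul, map_neg,
    InnerProductSpace.toDual_apply_apply, neg_inj]
  ring

end RadialKernel

section WeaklyHarmonic

variable {E : Type*} [NormedAddCommGroup E] [InnerProductSpace ℝ E] [FiniteDimensional ℝ E]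
  [MeasurableSpace E] [BorelSpace E]

/-- A function is weakly harmonic on `U` if its gradient is orthogonal in `L²` to the gradient of
every `C¹` test function with compact support in `U`. Being phrased with the pointwise gradient,
the notion is meant for locally Lipschitz functions. -/
def IsWeaklyHarmonicOn (u : E → ℝ) (U : Set E) : Prop :=
  ∀ φ : E → ℝ, ContDiff ℝ 1 φ → HasCompactSupport φ → tsupport φ ⊆ U →
    ∫ x, ⟪∇ u x, ∇ φ x⟫ = 0

lemma IsWeaklyHarmonicOn.mono {u : E → ℝ} {U V : Set E} (hu : IsWeaklyHarmonicOn u U)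
    (hVU : V ⊆ U) : IsWeaklyHarmonicOn u V :=
  fun φ hφ hc hs => hu φ hφ hc (hs.trans hVU)

lemma integral_comp_add_smul {F : Type*} [NormedAddCommGroup F] [NormedSpace ℝ F] (f : E → F)
    (z : E) (t : ℝ) :
    ∫ y, f (z + t • y) = |(t ^ Module.finrank ℝ E)⁻¹| • ∫ y, f y := by
  rw [Measure.integral_comp_smul volume (fun w => f (z + w)) t, integral_add_left_eq_self f z]

lemma integral_radialBump_pos (m : ℕ) : 0 < ∫ y : E, radialBump (m + 2) y := by
  refine (contDiff_radialBump m).continuous.integral_pos_of_hasCompactSupport_nonneg_nonzero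
    (hasCompactSupport_radialBump (by lia)) (fun y => ?_) (x := 0) ?_
  · exact pow_nonneg (le_max_right _ _) _
  · simp [radialBump]

lemma IsWeaklyHarmonicOn.integral_inner_gradient_mul_radialBump {u : E → ℝ} {z : E} {r t : ℝ}
    (hu : IsWeaklyHarmonicOn u (ball z r)) (ht : 0 < t) (htr : t < r) :
    ∫ y, ⟪∇ u (z + t • y), y⟫ * radialBump 2 y = 0 := by
  set φ : E → ℝ := fun w => radialBump 3 (t⁻¹ • (w - z)) with hφ
  have hts : tsupport φ ⊆ closedBall z t := tsupport_radialBump_comp_subset (by simp) z ht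
  have htest : ∫ w, ⟪∇ u w, ∇ φ w⟫ = 0 := hu φ ((contDiff_radialBump 1).comp (by fun_prop))
    ((isCompact_closedBall z t).of_isClosed_subset (isClosed_tsupport φ) hts)
    (hts.trans (closedBall_subset_ball htr))
  have hgrad : ∀ y, ⟪∇ u (z + t • y), y⟫ * radialBump 2 y =
      -(t / 6) * ⟪∇ u (z + t • y), ∇ φ (z + t • y)⟫ := fun y => by
    rw [hφ, gradient_radialBump_comp, add_sub_cancel_left, inv_smul_smul₀ ht.ne',
      real_inner_smul_right, real_inner_smul_right]
    field_simp
    push_cast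
    ring
  simp_rw [hgrad]
  rw [integral_const_mul, integral_comp_add_smul (fun w => ⟪∇ u w, ∇ φ w⟫), htest, smul_zero,
    mul_zero]

lemma ae_hasDerivAt_comp_add_smul {u : E → ℝ} (hu : LocallyLipschitz u) (z : E) {s : ℝ}
    (hs : s ≠ 0) : ∀ᵐ y, HasDerivAt (fun a : ℝ => u (z + a • y)) ⟪∇ u (z + s • y), y⟫ s := by
  have hqmp : Measure.QuasiMeasurePreserving (fun y : E => z + s • y) :=
    (measurePreserving_add_left volume z).quasiMeasurePreserving.comp
      (Measure.quasiMeasurePreserving_smul volume hs)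
  filter_upwards [hqmp.ae (ae_differentiableAt_of_locallyLipschitzOn isOpen_univ
    hu.locallyLipschitzOn)] with y hy
  have hline : HasDerivAt (fun a : ℝ => z + a • y) y s := by
    simpa using ((hasDerivAt_id s).smul_const y).const_add z
  rw [inner_gradient_left]
  exact (hy (mem_univ _)).hasFDerivAt.comp_hasDerivAt s hline

lemma hasDerivAt_integral_comp_add_smul {u k : E → ℝ} (hu : LocallyLipschitz u)
    (hk : Continuous k) (hkc : HasCompactSupport k) (z : E) {s : ℝ} (hs : s ≠ 0) :
    HasDerivAt (fun a : ℝ => ∫ y, u (z + a • y) * k y) (∫ y, ⟪∇ u (z + s • y), y⟫ * k y) s := by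
  have hcont := hu.continuous
  obtain ⟨C, hC⟩ := exists_lipschitzOnWith_comp_add_smul hu hkc z (isCompact_closedBall s 1)
  refine (hasDerivAt_integral_of_dominated_loc_of_lip (closedBall_mem_nhds s one_pos)
    (bound := fun y => C * ‖k y‖) (.of_forall fun a => ?_) ?_ ?_ (.of_forall hC) ?_ ?_).2
  · exact Continuous.aestronglyMeasurable (by fun_prop)
  · exact Continuous.integrable_of_hasCompactSupport (by fun_prop) hkc.mul_left
  · have hgrad : Measurable fun y => ∇ u (z + s • y) := (measurable_gradient u).comp (by fun_prop)
    exact ((hgrad.inner measurable_id).mul hk.measurable).aestronglyMeasurable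
  · exact (hk.norm.integrable_of_hasCompactSupport hkc.norm).const_mul C
  · filter_upwards [ae_hasDerivAt_comp_add_smul hu z hs] with y hy
    exact hy.mul_const _

lemma continuous_integral_comp_add_smul {u k : E → ℝ} (hu : Continuous u)
    (hk : Continuous k) (hkc : HasCompactSupport k) (z : E) :
    Continuous fun a : ℝ => ∫ y, u (z + a • y) * k y := by
  rw [← continuousOn_univ]
  refine continuousOn_integral_of_compact_support hkc (by fun_prop) fun a y _ hy => ?_
  rw [image_eq_zero_of_notMem_tsupport hy, mul_zero]

lemma IsWeaklyHarmonicOn.integral_comp_add_smul_mul_radialBump {u : E → ℝ} {z : E} {r t : ℝ}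
    (hu : IsWeaklyHarmonicOn u (ball z r)) (hL : LocallyLipschitz u) (ht : 0 < t) (htr : t < r) :
    ∫ y, u (z + t • y) * radialBump 2 y = u z * ∫ y : E, radialBump 2 y := by
  have hbump : Continuous (radialBump 2 : E → ℝ) := (contDiff_radialBump 0).continuous
  have hbumpc : HasCompactSupport (radialBump 2 : E → ℝ) := hasCompactSupport_radialBump (by simp)
  set F : ℝ → ℝ := fun a => ∫ y, u (z + a • y) * radialBump 2 y with hF
  have hderiv : ∀ a ∈ Ioo 0 t, HasDerivAt F 0 a := fun a ha => by
    simpa only [hu.integral_inner_gradient_mul_radialBump ha.1 (ha.2.trans htr)] using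
      hasDerivAt_integral_comp_add_smul hL hbump hbumpc z ha.1.ne'
  obtain ⟨a, -, hslope⟩ := exists_hasDerivAt_eq_slope F (fun _ => 0) ht
    (continuous_integral_comp_add_smul hL.continuous hbump hbumpc z).continuousOn hderiv
  have hconst : F t = F 0 := by
    simp only [sub_zero, eq_div_iff ht.ne', zero_mul] at hslope
    exact sub_eq_zero.1 hslope.symm
  calc F t = F 0 := hconst
    _ = u z * ∫ y : E, radialBump 2 y := by simp [hF, integral_const_mul]

end WeaklyHarmonic

section MeanValue

variable {E : Type*} [NormedAddCommGroup E] [InnerProductSpace ℝ E] [FiniteDimensional ℝ E]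
  [MeasurableSpace E] [BorelSpace E]

/-- The radial mollifier of mass one supported in the closed ball of radius `t`. Convolution with
it reproduces weakly harmonic functions, which transfers derivatives onto the kernel. -/
noncomputable def radialMollifier (t : ℝ) (x : E) : ℝ :=
  (∫ y : E, radialBump 2 (t⁻¹ • y))⁻¹ * radialBump 2 (t⁻¹ • x)

lemma contDiff_radialMollifier (t : ℝ) : ContDiff ℝ 1 (radialMollifier t : E → ℝ) :=
  contDiff_const.mul ((contDiff_radialBump 0).comp (by fun_prop))

lemma tsupport_radialMollifier_subset {t : ℝ} (ht : 0 < t) :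
    tsupport (radialMollifier t : E → ℝ) ⊆ closedBall 0 t :=
  (tsupport_mul_subset_right ..).trans <| by
    simpa using tsupport_radialBump_comp_subset two_ne_zero (0 : E) ht

lemma IsWeaklyHarmonicOn.convolution_radialMollifier {u : E → ℝ} {z : E} {r t : ℝ}
    (hu : IsWeaklyHarmonicOn u (ball z r)) (hL : LocallyLipschitz u) (ht : 0 < t) (htr : t < r) :
    (u ⋆[ContinuousLinearMap.lsmul ℝ ℝ, volume] radialMollifier t) z = u z := by
  have hmean : ∫ y, u (z + t • y) * radialBump 2 y = u z * ∫ y : E, radialBump 2 y :=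
    hu.integral_comp_add_smul_mul_radialBump hL ht htr
  have hmass := integral_comp_add_smul (fun w : E => radialBump 2 (t⁻¹ • w)) 0 t
  have hscale := integral_comp_add_smul (fun w => u w * radialBump 2 (t⁻¹ • (z - w))) z t
  simp only [zero_add, sub_add_cancel_left, smul_neg, radialBump_neg, inv_smul_smul₀ ht.ne',
    smul_eq_mul] at hmass hscale
  have hne : (∫ y : E, radialBump 2 y) ≠ 0 := (integral_radialBump_pos 0).ne'
  rw [hscale, hmass, mul_left_comm, mul_right_inj' (left_ne_zero_of_mul (hmass ▸ hne))] at hmean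
  simp only [convolution_lsmul, radialMollifier, smul_eq_mul, mul_left_comm (u _)]
  rw [integral_const_mul, hmean, mul_comm (u z),
    inv_mul_cancel_left₀ (right_ne_zero_of_mul (hmass ▸ hne))]

lemma hasFDerivAt_of_eventuallyEq_convolution {f g : E → ℝ} {x : E} (hf : LocallyIntegrable f)
    (hg : ContDiff ℝ 1 g) (hgc : HasCompactSupport g)
    (hfg : f =ᶠ[𝓝 x] f ⋆[ContinuousLinearMap.lsmul ℝ ℝ, volume] g) :
    HasFDerivAt f (∫ w, f w • fderiv ℝ g (x - w)) x :=
  (hgc.hasFDerivAt_convolution_right (ContinuousLinearMap.lsmul ℝ ℝ) hf hg x).congr_of_eventuallyEq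
    hfg

lemma tendsto_integral_smul_comp_sub_of_tendstoUniformlyOn {G : Type*} [NormedAddCommGroup G]
    [NormedSpace ℝ G] {u : ℕ → E → ℝ} {v : E → ℝ} {K : Set E} {g : E → G} {z : E} {t : ℝ}
    (hu : ∀ k, Continuous (u k)) (hv : Continuous v) (huv : TendstoUniformlyOn u v atTop K)
    (hg : Continuous g) (hgt : tsupport g ⊆ closedBall 0 t) (hK : closedBall z t ⊆ K) :
    Tendsto (fun k => ∫ w, u k w • g (z - w)) atTop (𝓝 (∫ w, v w • g (z - w))) := by
  have hsupp : tsupport (fun w => g (z - w)) ⊆ closedBall z t := fun w hw => by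
    simpa [dist_eq_norm, norm_sub_rev] using
      hgt (tsupport_comp_subset_preimage g (f := (z - ·)) (by fun_prop) hw)
  exact tendsto_integral_smul_of_tendstoUniformlyOn hu hv huv (hg.comp (by fun_prop))
    ((isCompact_closedBall z t).of_isClosed_subset (isClosed_tsupport _) hsupp) (hsupp.trans hK)

lemma tendsto_gradient_of_isWeaklyHarmonicOn_of_continuous {u : ℕ → E → ℝ} {v : E → ℝ} {x : E}
    {r : ℝ} (hr : 0 < r) (hu : ∀ k, LocallyLipschitz (u k)) (hv : Continuous v)
    (hharm : ∀ᶠ k in atTop, IsWeaklyHarmonicOn (u k) (ball x r))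
    (huv : TendstoUniformlyOn u v atTop (closedBall x r)) :
    Tendsto (fun k => ∇ (u k) x) atTop (𝓝 (∇ v x)) := by
  set t := r / 4 with ht
  set m : E → ℝ := radialMollifier t
  have ht0 : 0 < t := by positivity
  have hmd : ContDiff ℝ 1 m := contDiff_radialMollifier t
  have hmt : tsupport m ⊆ closedBall 0 t := tsupport_radialMollifier_subset ht0
  have hmc : HasCompactSupport m :=
    (isCompact_closedBall 0 t).of_isClosed_subset (isClosed_tsupport m) hmt
  have hsub : ∀ z ∈ ball x (r / 2), closedBall z t ⊆ closedBall x r := fun z hz =>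
    closedBall_subset_closedBall' (by linarith [mem_ball.1 hz])
  have hrepr : ∀ᶠ k in atTop, ∀ z ∈ ball x (r / 2),
      u k z = (u k ⋆[ContinuousLinearMap.lsmul ℝ ℝ, volume] m) z := by
    filter_upwards [hharm] with k hk z hz
    have hball : ball z (r / 2) ⊆ ball x r := ball_subset_ball' (by linarith [mem_ball.1 hz])
    exact ((hk.mono hball).convolution_radialMollifier (hu k) ht0 (by linarith)).symm
  have hreprv : ∀ z ∈ ball x (r / 2), v z = (v ⋆[ContinuousLinearMap.lsmul ℝ ℝ, volume] m) z :=
    fun z hz => tendsto_nhds_unique_of_eventuallyEq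
      (huv.tendsto_at (hsub z hz (mem_closedBall_self ht0.le)))
      (tendsto_integral_smul_comp_sub_of_tendstoUniformlyOn (fun k => (hu k).continuous) hv huv
        hmd.continuous hmt (hsub z hz)) (hrepr.mono fun k hk => hk z hz)
  have hnhds : ball x (r / 2) ∈ 𝓝 x := ball_mem_nhds x (by positivity)
  have hfderiv : Tendsto (fun k => fderiv ℝ (u k) x) atTop (𝓝 (fderiv ℝ v x)) := by
    rw [(hasFDerivAt_of_eventuallyEq_convolution hv.locallyIntegrable hmd hmc
      (mem_of_superset hnhds hreprv)).fderiv]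
    refine (tendsto_integral_smul_comp_sub_of_tendstoUniformlyOn (fun k => (hu k).continuous) hv
      huv (hmd.continuous_fderiv one_ne_zero) ((tsupport_fderiv_subset ℝ).trans hmt)
      (hsub x (mem_ball_self (by positivity)))).congr' ?_
    filter_upwards [hrepr] with k hk
    exact (hasFDerivAt_of_eventuallyEq_convolution (hu k).continuous.locallyIntegrable hmd hmc
      (mem_of_superset hnhds hk)).fderiv.symm
  exact ((InnerProductSpace.toDual ℝ E).symm.continuous.tendsto _).comp hfderiv

theorem tendsto_gradient_of_isWeaklyHarmonicOn {u : ℕ → E → ℝ} {v : E → ℝ} {x : E}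
    {r : ℝ} (hr : 0 < r) (hu : ∀ k, LocallyLipschitz (u k))
    (hharm : ∀ᶠ k in atTop, IsWeaklyHarmonicOn (u k) (ball x r))
    (huv : TendstoUniformlyOn u v atTop (closedBall x r)) :
    Tendsto (fun k => ∇ (u k) x) atTop (𝓝 (∇ v x)) := by
  have hv : ContinuousOn v (closedBall x r) :=
    huv.continuousOn (.of_forall fun k => (hu k).continuous.continuousOn)
  obtain ⟨w, hw⟩ := ContinuousMap.exists_restrict_eq isClosed_closedBall
    ⟨(closedBall x r).domRestrict v, hv.domRestrict⟩
  have hwv : EqOn v w (closedBall x r) := fun z hz =>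
    (DFunLike.congr_fun hw (⟨z, hz⟩ : closedBall x r)).symm
  have hgrad : ∇ v x = ∇ w x :=
    (hwv.eventuallyEq_of_mem (closedBall_mem_nhds x hr)).gradient_eq
  rw [hgrad]
  exact tendsto_gradient_of_isWeaklyHarmonicOn_of_continuous hr hu w.continuous hharm
    (huv.congr_right hwv)

end MeanValue

section Energy

variable {E : Type*} [NormedAddCommGroup E] [InnerProductSpace ℝ E]

/-- The integrand `‖∇u‖² + 𝟙_{u > 0}` of the energy `J`, as a real-valued function. -/
noncomputable def energyDensity [CompleteSpace E] (u : E → ℝ) (x : E) : ℝ :=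
  ‖∇ u x‖ ^ 2 + if 0 < u x then 1 else 0

lemma energyDensity_nonneg [CompleteSpace E] (u : E → ℝ) (x : E) : 0 ≤ energyDensity u x := by
  unfold energyDensity
  split_ifs <;> positivity

lemma energyDensity_add_const_mul [CompleteSpace E] {u φ : E → ℝ} {x : E} {s : ℝ}
    (hu : DifferentiableAt ℝ u x) (hφ : DifferentiableAt ℝ φ x)
    (hpos : 0 < u x + s * φ x ↔ 0 < u x) :
    energyDensity (fun y => u y + s * φ y) x =
      energyDensity u x + (2 * s * ⟪∇ u x, ∇ φ x⟫ + s ^ 2 * ⟪∇ φ x, ∇ φ x⟫) := by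
  have hgrad : ∇ (fun y => u y + s * φ y) x = ∇ u x + s • ∇ φ x := by
    simp only [gradient, fderiv_fun_add hu (hφ.const_mul s), fderiv_const_mul hφ, map_add, map_smul]
  rw [energyDensity, energyDensity, hgrad, norm_add_sq_real, norm_smul, real_inner_smul_right,
    mul_pow, Real.norm_eq_abs, sq_abs, real_inner_self_eq_norm_sq, if_congr hpos rfl rfl]
  ring

lemma integrableOn_energyDensity [FiniteDimensional ℝ E] [MeasurableSpace E] [BorelSpace E]
    {μ : Measure E} [IsFiniteMeasureOnCompacts μ] {u : E → ℝ} {D : Set E}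
    (hu : LocallyLipschitz u) (hD : Bornology.IsBounded D) :
    IntegrableOn (energyDensity u) D μ := by
  refine .add ?_ ?_
  · simpa only [real_inner_self_eq_norm_sq] using integrableOn_inner_gradient hu hu hD
  · refine Measure.integrableOn_of_bounded (M := 1) hD.measure_lt_top.ne
      (Measurable.ite (isOpen_lt continuous_const hu.continuous).measurableSet measurable_const
        measurable_const).aestronglyMeasurable (.of_forall fun x => ?_)
    split_ifs <;> simp

variable {n : ℕ} {Ω D : Set (EuclideanSpace ℝ (Fin n))} {u : EuclideanSpace ℝ (Fin n) → ℝ}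

lemma JE_eq_ofReal_integral (hu : LocallyLipschitz u) (hD : Bornology.IsBounded D) :
    JE D u = ENNReal.ofReal (∫ x in D, energyDensity u x) := by
  rw [ofReal_integral_eq_lintegral_ofReal (integrableOn_energyDensity hu hD)
    (.of_forall (energyDensity_nonneg u)), JE]
  refine lintegral_congr fun x => ?_
  rw [energyDensity, ENNReal.ofReal_add (by positivity) (by split_ifs <;> simp),
    ENNReal.ofReal_pow (norm_nonneg _), ofReal_norm, enorm_eq_nnnorm]
  split_ifs <;> simp

namespace IsMinimizer

lemma integral_energyDensity_le (hu : IsMinimizer Ω u) {v : EuclideanSpace ℝ (Fin n) → ℝ}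
    (hv : ∀ x, 0 ≤ v x) (hvL : LocallyLipschitz v) {c : EuclideanSpace ℝ (Fin n)} {r : ℝ}
    (hvu : {x | v x ≠ u x} ⊆ Ω ∩ ball c r) :
    ∫ x in Ω ∩ ball c r, energyDensity u x ≤ ∫ x in Ω ∩ ball c r, energyDensity v x := by
  have hD : Bornology.IsBounded (Ω ∩ ball c r) := isBounded_ball.subset inter_subset_right
  have hJ : JE (Ω ∩ ball c r) u ≤ JE (Ω ∩ ball c r) v := hu.2.2 v hv hvL (hD.subset hvu)
    (hvu.trans inter_subset_left) c r (hvu.trans inter_subset_right)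
  rwa [JE_eq_ofReal_integral hu.2.1 hD, JE_eq_ofReal_integral hvL hD,
    ENNReal.ofReal_le_ofReal_iff (integral_nonneg (energyDensity_nonneg v))] at hJ

lemma nonneg_first_variation (hu : IsMinimizer Ω u) {φ : EuclideanSpace ℝ (Fin n) → ℝ}
    (hφ : ContDiff ℝ 1 φ) {r : ℝ} (hφr : tsupport φ ⊆ Ω ∩ ball 0 r) {s : ℝ}
    (hs : ∀ x ∈ tsupport φ, 0 < u x ∧ 0 < u x + s * φ x) :
    0 ≤ 2 * s * (∫ x in Ω ∩ ball 0 r, ⟪∇ u x, ∇ φ x⟫) +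
      s ^ 2 * ∫ x in Ω ∩ ball 0 r, ⟪∇ φ x, ∇ φ x⟫ := by
  have hD : Bornology.IsBounded (Ω ∩ ball 0 r) := isBounded_ball.subset inter_subset_right
  have hφL : LocallyLipschitz φ := hφ.locallyLipschitz
  have hoff : ∀ x ∉ tsupport φ, φ x = 0 := fun x hx => image_eq_zero_of_notMem_tsupport hx
  have hpos : ∀ x, 0 < u x + s * φ x ↔ 0 < u x := fun x => by
    by_cases hx : x ∈ tsupport φ
    · exact iff_of_true (hs x hx).2 (hs x hx).1
    · rw [hoff x hx, mul_zero, add_zero]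
  have hle := hu.integral_energyDensity_le (v := fun x => u x + s * φ x) (c := 0) (r := r)
    (fun x => ?_) (hu.2.1.add (contDiff_const.mul hφ).locallyLipschitz)
    (fun x hx => hφr <| by_contra fun h => hx <| by simp [hoff x h])
  · have hadd : ∫ x in Ω ∩ ball 0 r, energyDensity (fun y => u y + s * φ y) x =
        (∫ x in Ω ∩ ball 0 r, energyDensity u x) +
          (2 * s * (∫ x in Ω ∩ ball 0 r, ⟪∇ u x, ∇ φ x⟫) +
            s ^ 2 * ∫ x in Ω ∩ ball 0 r, ⟪∇ φ x, ∇ φ x⟫) := by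
      have hi₁ := (integrableOn_inner_gradient (μ := volume) hu.2.1 hφL hD).const_mul (2 * s)
      have hi₂ := (integrableOn_inner_gradient (μ := volume) hφL hφL hD).const_mul (s ^ 2)
      rw [← integral_const_mul, ← integral_const_mul, ← integral_add hi₁ hi₂,
        ← integral_add (integrableOn_energyDensity hu.2.1 hD) (hi₁.fun_add hi₂)]
      refine integral_congr_ae (ae_restrict_of_ae ?_)
      filter_upwards [ae_differentiableAt_of_locallyLipschitzOn isOpen_univ
        hu.2.1.locallyLipschitzOn] with x hx
      exact energyDensity_add_const_mul (hx (mem_univ x)) (hφ.differentiable one_ne_zero x) (hpos x)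
    linarith
  · by_cases hx : x ∈ tsupport φ
    · exact (hs x hx).2.le
    · simpa only [hoff x hx, mul_zero, add_zero] using hu.1 x

lemma isWeaklyHarmonicOn (hu : IsMinimizer Ω u) : IsWeaklyHarmonicOn u (Ω ∩ {x | 0 < u x}) := by
  intro φ hφ hφc hφs
  obtain ⟨r, hr⟩ := hφc.isCompact.isBounded.subset_ball (0 : EuclideanSpace ℝ (Fin n))
  have hφr : tsupport φ ⊆ Ω ∩ ball 0 r := subset_inter (hφs.trans inter_subset_left) hr
  have hcont : Continuous u := hu.2.1.continuous
  have hpos : ∀ᶠ s : ℝ in 𝓝 0, ∀ x ∈ tsupport φ, 0 < u x + s * φ x := by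
    refine hφc.isCompact.eventually_forall_of_forall_eventually fun x hx => ?_
    have : Continuous fun p : ℝ × EuclideanSpace ℝ (Fin n) => u p.2 + p.1 * φ p.2 := by
      have := hφ.continuous
      fun_prop
    exact this.continuousAt.eventually (lt_mem_nhds (by simpa using (hφs hx).2))
  rw [← setIntegral_eq_integral_of_forall_compl_eq_zero (s := Ω ∩ ball 0 r) fun x hx => ?_]
  · refine eq_zero_of_eventually_nonneg_quadratic
      (d := ∫ x in Ω ∩ ball 0 r, ⟪∇ φ x, ∇ φ x⟫) (hpos.mono fun s hs => ?_)
    exact hu.nonneg_first_variation hφ hφr fun x hx => ⟨(hφs hx).2, hs x hx⟩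
  · have : φ =ᶠ[𝓝 x] fun _ => 0 := notMem_tsupport_iff_eventuallyEq.1 fun h => hx (hφr h)
    rw [this.gradient_eq, gradient_fun_const, inner_zero_right]

end IsMinimizer

end Energy

section Competitor

variable {E : Type*} [PseudoMetricSpace E] {y z : E} {r ε : ℝ}

/-- The cone `2ε (dist z y - r/2)⁺`, the barrier pushing a minimizer down near `y`: it vanishes on
`ball y (r/2)` and is at least `ε r` off `ball y r`. -/
noncomputable def coneBarrier (y : E) (r ε : ℝ) (z : E) : ℝ := 2 * ε * max (dist z y - r / 2) 0

lemma coneBarrier_nonneg (hε : 0 ≤ ε) : 0 ≤ coneBarrier y r ε z := by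
  unfold coneBarrier
  positivity

lemma coneBarrier_eq_zero (hz : z ∈ ball y (r / 2)) : coneBarrier y r ε z = 0 := by
  rw [coneBarrier, max_eq_right (by linarith [mem_ball.1 hz]), mul_zero]

lemma mul_le_coneBarrier (hε : 0 ≤ ε) (hz : z ∉ ball y r) : ε * r ≤ coneBarrier y r ε z := by
  have hdist : r / 2 ≤ max (dist z y - r / 2) 0 :=
    le_max_of_le_left (by linarith [not_lt.1 (mt mem_ball.2 hz)])
  calc ε * r = 2 * ε * (r / 2) := by ring
    _ ≤ 2 * ε * max (dist z y - r / 2) 0 := by gcongr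

lemma lipschitzWith_coneBarrier (hε : 0 ≤ ε) :
    LipschitzWith (2 * ε).toNNReal (coneBarrier y r ε) := by
  refine .of_dist_le_mul fun a b => ?_
  rw [Real.coe_toNNReal _ (by positivity), Real.dist_eq, coneBarrier, coneBarrier, ← mul_sub,
    abs_mul, abs_of_nonneg (by positivity : 0 ≤ 2 * ε)]
  gcongr
  calc |max (dist a y - r / 2) 0 - max (dist b y - r / 2) 0|
      ≤ |(dist a y - r / 2) - (dist b y - r / 2)| := abs_max_sub_max_le_abs _ _ _
    _ = |dist a y - dist b y| := by ring_nf
    _ ≤ dist a b := abs_dist_sub_le a b y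

/-- The competitor `min u w`, where `w` is the cone barrier. The term `(u - ε r)⁺` vanishes on
`ball y r` when `u ≤ ε r` there, and makes the competitor equal to `u` off that ball. -/
noncomputable def coneCompetitor (u : E → ℝ) (y : E) (r ε : ℝ) (z : E) : ℝ :=
  min (u z) (coneBarrier y r ε z + max (u z - ε * r) 0)

variable {u : E → ℝ}

lemma coneCompetitor_le : coneCompetitor u y r ε z ≤ u z := min_le_left _ _

lemma coneCompetitor_nonneg (hu : 0 ≤ u z) (hε : 0 ≤ ε) : 0 ≤ coneCompetitor u y r ε z :=
  le_min hu (add_nonneg (coneBarrier_nonneg hε) (le_max_right _ _))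

lemma locallyLipschitz_coneCompetitor (hu : LocallyLipschitz u) (hε : 0 ≤ ε) :
    LocallyLipschitz (coneCompetitor u y r ε) :=
  hu.min ((lipschitzWith_coneBarrier hε).locallyLipschitz.add
    ((hu.sub (.const (ε * r))).max_const 0))

lemma coneCompetitor_eq_min (hz : u z ≤ ε * r) :
    coneCompetitor u y r ε z = min (u z) (coneBarrier y r ε z) := by
  rw [coneCompetitor, max_eq_right (sub_nonpos.2 hz), add_zero]

lemma coneCompetitor_ne_subset_ball (hε : 0 ≤ ε) :
    {z | coneCompetitor u y r ε z ≠ u z} ⊆ ball y r := fun z hz => by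
  by_contra hzr
  refine hz (min_eq_left ?_)
  linarith [mul_le_coneBarrier hε hzr, le_max_left (u z - ε * r) 0]

lemma coneCompetitor_eventuallyEq_zero (hr : 0 < r) (hu : ∀ a, 0 ≤ u a)
    (hle : ∀ a ∈ ball y r, u a ≤ ε * r) (hz : z ∈ ball y (r / 2)) :
    coneCompetitor u y r ε =ᶠ[𝓝 z] fun _ => 0 := by
  filter_upwards [isOpen_ball.mem_nhds hz] with a ha
  rw [coneCompetitor_eq_min (hle a (ball_subset_ball (half_le_self hr.le) ha)),
    coneBarrier_eq_zero ha, min_eq_right (hu a)]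

lemma coneCompetitor_eventuallyEq_coneBarrier (hu : Continuous u) (hε : 0 ≤ ε)
    (hle : ∀ a ∈ ball y r, u a ≤ ε * r) (hz : z ∈ ball y r) (hlt : coneBarrier y r ε z < u z) :
    coneCompetitor u y r ε =ᶠ[𝓝 z] coneBarrier y r ε := by
  filter_upwards [isOpen_ball.mem_nhds hz,
    (isOpen_lt (lipschitzWith_coneBarrier hε).continuous hu).mem_nhds hlt] with a ha hlt
  rw [coneCompetitor_eq_min (hle a ha), min_eq_right (le_of_lt hlt)]

end Competitor

section Decay

lemma energyDensity_coneCompetitor_add_indicator_le {E : Type*} [NormedAddCommGroup E]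
    [InnerProductSpace ℝ E] [CompleteSpace E] {u : E → ℝ} {y z : E} {r ε : ℝ} (hr : 0 < r)
    (hε : 0 ≤ ε) (hu₀ : ∀ a, 0 ≤ u a) (hu : Continuous u)
    (hle : ∀ a ∈ ball y r, u a ≤ ε * r) (hz : z ∈ ball y r) (hd : DifferentiableAt ℝ u z) :
    energyDensity (coneCompetitor u y r ε) z + ({x | 0 < u x} ∩ ball y (r / 2)).indicator 1 z ≤
      energyDensity u z + 4 * ε ^ 2 * ({x | 0 < u x} ∩ ball y r).indicator 1 z := by
  have hind : 0 ≤ ({x | 0 < u x} ∩ ball y r).indicator (1 : E → ℝ) z :=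
    indicator_nonneg (fun _ _ => zero_le_one) z
  obtain hlow | hup := le_or_gt (u z) (coneBarrier y r ε z)
  · have hnot : z ∉ {x | 0 < u x} ∩ ball y (r / 2) := fun ⟨hpos, hhalf⟩ =>
      hpos.not_ge (hlow.trans_eq (coneBarrier_eq_zero hhalf))
    have heq : coneCompetitor u y r ε z = u z := by
      rw [coneCompetitor_eq_min (hle z hz), min_eq_left hlow]
    have hgrad : ‖∇ (coneCompetitor u y r ε) z‖ ≤ ‖∇ u z‖ :=
      norm_gradient_le_of_le_of_eq (fun _ => coneCompetitor_le) heq hd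
    rw [indicator_of_notMem hnot, add_zero, energyDensity, energyDensity, heq]
    refine (add_le_add_left (pow_le_pow_left₀ (norm_nonneg _) hgrad 2) _).trans
      (le_add_of_nonneg_right (by positivity))
  have hpos : 0 < u z := (coneBarrier_nonneg hε).trans_lt hup
  rw [indicator_of_mem (s := _ ∩ ball y r) ⟨hpos, hz⟩, energyDensity, energyDensity, if_pos hpos,
    Pi.one_apply]
  by_cases hhalf : z ∈ ball y (r / 2)
  · have hzero := coneCompetitor_eventuallyEq_zero hr hu₀ hle hhalf
    rw [hzero.gradient_eq, hzero.eq_of_nhds, gradient_fun_const, norm_zero,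
      indicator_of_mem (s := {x | 0 < u x} ∩ ball y (r / 2)) ⟨hpos, hhalf⟩, if_neg (lt_irrefl 0),
      Pi.one_apply]
    nlinarith [sq_nonneg ‖∇ u z‖, sq_nonneg ε]
  · have hgrad : ‖∇ (coneBarrier y r ε) z‖ ≤ 2 * ε := by
      rw [norm_gradient, ← Real.coe_toNNReal (2 * ε) (by positivity)]
      exact norm_fderiv_le_of_lipschitz ℝ (lipschitzWith_coneBarrier hε)
    rw [(coneCompetitor_eventuallyEq_coneBarrier hu hε hle hz hup).gradient_eq,
      indicator_of_notMem fun h => hhalf h.2]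
    have hsq := pow_le_pow_left₀ (norm_nonneg _) hgrad 2
    split_ifs <;> nlinarith [sq_nonneg ‖∇ u z‖]

variable {n : ℕ} {Ω : Set (EuclideanSpace ℝ (Fin n))} {u : EuclideanSpace ℝ (Fin n) → ℝ}
  {y : EuclideanSpace ℝ (Fin n)} {r ε : ℝ}

lemma IsMinimizer.volume_pos_inter_ball_half_le (hu : IsMinimizer Ω u) (hr : 0 < r) (hε : 0 ≤ ε)
    (hΩ : ball y r ⊆ Ω) (hle : ∀ z ∈ ball y r, u z ≤ ε * r) :
    volume.real ({z | 0 < u z} ∩ ball y (r / 2)) ≤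
      4 * ε ^ 2 * volume.real ({z | 0 < u z} ∩ ball y r) := by
  have hcomp := locallyLipschitz_coneCompetitor (y := y) (r := r) hu.2.1 hε
  have hmin := hu.integral_energyDensity_le (v := coneCompetitor u y r ε)
    (fun z => coneCompetitor_nonneg (hu.1 z) hε) hcomp
    (subset_inter ((coneCompetitor_ne_subset_ball hε).trans hΩ) (coneCompetitor_ne_subset_ball hε))
  rw [inter_eq_right.2 hΩ] at hmin
  have hmeas : ∀ s, MeasurableSet ({z | 0 < u z} ∩ ball y s) := fun s =>
    (isOpen_lt continuous_const hu.2.1.continuous).measurableSet.inter measurableSet_ball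
  have hint : ∀ s, IntegrableOn (({z | 0 < u z} ∩ ball y s).indicator 1 : _ → ℝ) (ball y r) :=
    fun s => (integrableOn_const (C := (1 : ℝ)) measure_ball_lt_top.ne).indicator (hmeas s)
  have hvol : ∀ s ≤ r, ∫ z in ball y r, ({z | 0 < u z} ∩ ball y s).indicator 1 z =
      volume.real ({z | 0 < u z} ∩ ball y s) := fun s hs => by
    rw [integral_indicator_one (hmeas s), measureReal_restrict_apply (hmeas s),
      inter_eq_left.2 (inter_subset_right.trans (ball_subset_ball hs))]
  have hE := fun {f : EuclideanSpace ℝ (Fin n) → ℝ} (hf : LocallyLipschitz f) =>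
    integrableOn_energyDensity (μ := volume) hf (isBounded_ball (x := y) (r := r))
  have hpointwise := setIntegral_mono_on_ae ((hE hcomp).add (hint (r / 2)))
    ((hE hu.2.1).add ((hint r).const_mul (4 * ε ^ 2))) measurableSet_ball <| by
      filter_upwards [ae_differentiableAt_of_locallyLipschitzOn isOpen_univ
        hu.2.1.locallyLipschitzOn] with z hz hzr
      exact energyDensity_coneCompetitor_add_indicator_le hr hε hu.1 hu.2.1.continuous hle hzr
        (hz (mem_univ z))
  simp only [Pi.add_apply] at hpointwise
  rw [integral_add (hE hcomp) (hint _), integral_add (hE hu.2.1) ((hint r).const_mul _),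
    integral_const_mul, hvol _ (half_le_self hr.le), hvol r le_rfl] at hpointwise
  linarith

end Decay

section Nondegeneracy

lemma measureReal_ball_mul {E : Type*} [NormedAddCommGroup E] [NormedSpace ℝ E]
    [FiniteDimensional ℝ E] [MeasurableSpace E] [BorelSpace E] (μ : Measure E) [μ.IsAddHaarMeasure]
    (x : E) {a : ℝ} (ha : 0 < a) (s : ℝ) :
    μ.real (ball x (a * s)) = a ^ Module.finrank ℝ E * μ.real (ball x s) := by
  rw [measureReal_def, μ.addHaar_ball_mul_of_pos x ha, ENNReal.toReal_mul,
    ENNReal.toReal_ofReal (by positivity), μ.addHaar_real_ball_center, measureReal_def]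

/-- The two conditions that propagate together from a ball to the concentric ball of half the
radius: `u ≤ ε s` on `ball y s`, and `{u > 0}` fills less of `ball y s` than the ball of radius
`ε s / (2 L)`, on which an `L`-Lipschitz function oscillates by at most `ε s / 2`. -/
structure IsSmallOnBall {E : Type*} [PseudoMetricSpace E] [MeasureSpace E] (u : E → ℝ) (L ε : ℝ)
    (y : E) (s : ℝ) : Prop where
  le : ∀ z ∈ ball y s, u z ≤ ε * s
  volume_lt : volume.real ({z | 0 < u z} ∩ ball y s) < volume.real (ball y (ε * s / (2 * L)))

lemma IsSmallOnBall.le_half {E : Type*} [NormedAddCommGroup E] [NormedSpace ℝ E]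
    [FiniteDimensional ℝ E] [MeasureSpace E] [BorelSpace E] [(volume : Measure E).IsAddHaarMeasure]
    {u : E → ℝ} {L : ℝ≥0} {y z : E} {s ε : ℝ} (hu : IsSmallOnBall u L ε y s) (hs : 0 < s)
    (hL : 0 < L) (hεL : ε ≤ L) (hlip : LipschitzOnWith L u (ball y s)) (hz : z ∈ ball y (s / 2)) :
    u z ≤ ε * (s / 2) := by
  by_contra! hlt
  refine hu.volume_lt.not_ge ?_
  rw [volume.addHaar_real_ball_center y, ← volume.addHaar_real_ball_center z]
  refine measureReal_mono (fun a ha => ?_) (measure_inter_lt_top_of_right_ne_top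
    measure_ball_lt_top.ne).ne
  have hL₀ : (0 : ℝ) < L := hL
  have hrad : ε * s / (2 * L) ≤ s / 2 := by
    rw [div_le_div_iff₀ (by positivity) two_pos]
    nlinarith
  have hay : a ∈ ball y s := by
    rw [mem_ball] at *
    linarith [dist_triangle a z y]
  refine ⟨?_, hay⟩
  have hosc : L * dist a z < ε * (s / 2) := by
    rw [mem_ball, lt_div_iff₀ (by positivity)] at ha
    linarith
  have hdist := hlip.dist_le_mul a hay z (ball_subset_ball (half_le_self hs.le) hz)
  rw [Real.dist_eq] at hdist
  exact show 0 < u a by linarith [neg_le_of_abs_le hdist]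

namespace IsMinimizer

variable {n : ℕ} {Ω : Set (EuclideanSpace ℝ (Fin n))} {u : EuclideanSpace ℝ (Fin n) → ℝ}
  {y : EuclideanSpace ℝ (Fin n)} {L : ℝ≥0} {r ε : ℝ}

lemma isSmallOnBall_half (hu : IsMinimizer Ω u) (hr : 0 < r) (hL : 0 < L) (hε : 0 < ε)
    (hεL : ε ≤ L) (hεn : 4 * ε ^ 2 ≤ (1 / 2) ^ n) (hΩ : ball y r ⊆ Ω)
    (hlip : LipschitzOnWith L u (ball y r)) (hsmall : IsSmallOnBall u L ε y r) :
    IsSmallOnBall u L ε y (r / 2) where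
  le _ hz := hsmall.le_half hr hL hεL hlip hz
  volume_lt := by
    calc volume.real ({z | 0 < u z} ∩ ball y (r / 2))
        ≤ 4 * ε ^ 2 * volume.real ({z | 0 < u z} ∩ ball y r) :=
          hu.volume_pos_inter_ball_half_le hr hε.le hΩ hsmall.le
      _ ≤ (1 / 2) ^ n * volume.real ({z | 0 < u z} ∩ ball y r) := by gcongr
      _ < (1 / 2) ^ n * volume.real (ball y (ε * r / (2 * L))) := by
          gcongr
          exact hsmall.volume_lt
      _ = volume.real (ball y (ε * (r / 2) / (2 * L))) := by
          have hscale := measureReal_ball_mul volume y one_half_pos (ε * r / (2 * L))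
          rw [finrank_euclideanSpace_fin] at hscale
          rw [← hscale]
          congr 2
          ring

lemma isSmallOnBall_of_le (hu : IsMinimizer Ω u) {δ : ℝ} (hr : 0 < r) (hL : 0 < L) (hε : 0 < ε)
    (hδ : 0 ≤ δ) (hδε : δ ≤ ε / 2) (hδn : 4 * δ ^ 2 < (ε / (4 * L)) ^ n) (hΩ : ball y r ⊆ Ω)
    (hle : ∀ z ∈ ball y r, u z ≤ δ * r) : IsSmallOnBall u L ε y (r / 2) where
  le z hz := by
    have := hle z (ball_subset_ball (half_le_self hr.le) hz)
    nlinarith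
  volume_lt := by
    calc volume.real ({z | 0 < u z} ∩ ball y (r / 2))
        ≤ 4 * δ ^ 2 * volume.real ({z | 0 < u z} ∩ ball y r) :=
          hu.volume_pos_inter_ball_half_le hr hδ hΩ hle
      _ ≤ 4 * δ ^ 2 * volume.real (ball y r) := by
          gcongr
          exacts [measure_ball_lt_top.ne, inter_subset_right]
      _ < (ε / (4 * L)) ^ n * volume.real (ball y r) := by
          gcongr
          exact ENNReal.toReal_pos (measure_ball_pos _ _ hr).ne' measure_ball_lt_top.ne
      _ = volume.real (ball y (ε * (r / 2) / (2 * L))) := by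
          have hscale := measureReal_ball_mul volume y (by positivity : 0 < ε / (4 * L)) r
          rw [finrank_euclideanSpace_fin] at hscale
          rw [← hscale]
          congr 2
          ring

lemma eq_zero_of_isSmallOnBall (hu : IsMinimizer Ω u) (hr : 0 < r) (hL : 0 < L) (hε : 0 < ε)
    (hεL : ε ≤ L) (hεn : 4 * ε ^ 2 ≤ (1 / 2) ^ n) (hΩ : ball y r ⊆ Ω)
    (hlip : LipschitzOnWith L u (ball y r)) (hsmall : IsSmallOnBall u L ε y r) : u y = 0 := by
  have hdyadic : ∀ j : ℕ, IsSmallOnBall u L ε y (r * (1 / 2) ^ j) := fun j => by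
    induction j with
    | zero => simpa only [pow_zero, mul_one] using hsmall
    | succ j ih =>
      have hsub : ball y (r * (1 / 2) ^ j) ⊆ ball y r :=
        ball_subset_ball (mul_le_of_le_one_right hr.le (pow_le_one₀ (by norm_num) (by norm_num)))
      rw [pow_succ, ← mul_assoc, mul_one_div]
      exact hu.isSmallOnBall_half (by positivity) hL hε hεL hεn (hsub.trans hΩ) (hlip.mono hsub) ih
  have hlim : Tendsto (fun j : ℕ => ε * (r * (1 / 2) ^ j)) atTop (𝓝 (ε * (r * 0))) :=
    ((_root_.tendsto_pow_atTop_nhds_zero_of_lt_one one_half_pos.le one_half_lt_one).const_mul r)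
      |>.const_mul ε
  rw [mul_zero, mul_zero] at hlim
  exact (ge_of_tendsto' hlim fun j => (hdyadic j).le y (mem_ball_self (by positivity))).antisymm
    (hu.1 y)

end IsMinimizer

theorem exists_pos_forall_isMinimizer_eq_zero (n : ℕ) (L : ℝ≥0) :
    ∃ δ : ℝ, 0 < δ ∧ ∀ (Ω : Set (EuclideanSpace ℝ (Fin n))) (u : EuclideanSpace ℝ (Fin n) → ℝ)
      (y : EuclideanSpace ℝ (Fin n)) (r : ℝ), IsMinimizer Ω u → 0 < r → ball y r ⊆ Ω →
      LipschitzOnWith L u (ball y r) → (∀ z ∈ ball y r, u z ≤ δ * r) → u y = 0 := by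
  have hL : 0 < L + 1 := by positivity
  obtain ⟨ε, hε, hεL, hεn⟩ := exists_pos_le_four_mul_sq_lt (a := (L + 1 : ℝ≥0)) (by positivity)
    (by positivity : (0 : ℝ) < (1 / 2) ^ n)
  obtain ⟨δ, hδ, hδε, hδn⟩ := exists_pos_le_four_mul_sq_lt (half_pos hε)
    (by positivity : (0 : ℝ) < (ε / (4 * (L + 1 : ℝ≥0))) ^ n)
  refine ⟨δ, hδ, fun Ω u y r hu hr hΩ hlip hle => ?_⟩
  have hhalf : ball y (r / 2) ⊆ ball y r := ball_subset_ball (half_le_self hr.le)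
  exact hu.eq_zero_of_isSmallOnBall (half_pos hr) hL hε hεL hεn.le (hhalf.trans hΩ)
    ((hlip.weaken (le_add_of_nonneg_right zero_le_one)).mono hhalf)
    (hu.isSmallOnBall_of_le hr hL hε hδ.le hδε hδn hΩ hle)

end Nondegeneracy

section Compactness

lemma lipschitzOnWith_of_tendsto {ι α β : Type*} [PseudoMetricSpace α] [PseudoMetricSpace β]
    {l : Filter ι} [l.NeBot] {f : ι → α → β} {g : α → β} {L : ℝ≥0} {s : Set α}
    (hf : ∀ i, LipschitzOnWith L (f i) s) (hfg : ∀ x ∈ s, Tendsto (f · x) l (𝓝 (g x))) :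
    LipschitzOnWith L g s :=
  .of_dist_le_mul fun a ha b hb =>
    le_of_tendsto' ((hfg a ha).dist (hfg b hb)) fun i => (hf i).dist_le_mul a ha b hb

variable {n : ℕ} {Ω : Set (EuclideanSpace ℝ (Fin n))} {u : ℕ → EuclideanSpace ℝ (Fin n) → ℝ}
  {v : EuclideanSpace ℝ (Fin n) → ℝ} {x : EuclideanSpace ℝ (Fin n)} {L : ℝ≥0} {R : ℝ}

lemma eventually_eventuallyEq_zero_of_hasFDerivAt_zero (hmin : ∀ k, IsMinimizer Ω (u k))
    (hR : 0 < R) (hΩ : closedBall x R ⊆ Ω) (hlip : ∀ k, LipschitzOnWith L (u k) (closedBall x R))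
    (huv : TendstoUniformlyOn u v atTop (closedBall x R)) (hx : v x = 0)
    (hv : HasFDerivAt v (0 : EuclideanSpace ℝ (Fin n) →L[ℝ] ℝ) x) :
    ∀ᶠ k in atTop, u k =ᶠ[𝓝 x] fun _ => 0 := by
  obtain ⟨δ, hδ, hzero⟩ := exists_pos_forall_isMinimizer_eq_zero n L
  have hflat : ∀ᶠ z in 𝓝 x, v z ≤ δ / 4 * dist z x := by
    filter_upwards [hv.isLittleO.def (by positivity : 0 < δ / 4)] with z hz
    rw [hx, sub_zero, _root_.zero_apply, sub_zero, ← dist_eq_norm] at hz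
    exact (le_abs_self _).trans hz
  obtain ⟨r, hr, hball⟩ :=
    Metric.eventually_nhds_iff_ball.1 (hflat.and (closedBall_mem_nhds x hR))
  filter_upwards [Metric.tendstoUniformlyOn_iff.1 huv (δ * r / 4) (by positivity)] with k hk
  filter_upwards [ball_mem_nhds x (half_pos hr)] with y hy
  have hsub : ball y (r / 2) ⊆ ball x r := ball_subset_ball' (by linarith [mem_ball.1 hy])
  have hsubR : ball y (r / 2) ⊆ closedBall x R := fun z hz => (hball z (hsub hz)).2
  refine hzero Ω (u k) y (r / 2) (hmin k) (half_pos hr) (hsubR.trans hΩ) ((hlip k).mono hsubR)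
    fun z hz => ?_
  have hclose := hk z (hsubR hz)
  rw [dist_comm, Real.dist_eq] at hclose
  have hdist : δ / 4 * dist z x ≤ δ / 4 * r := by
    gcongr
    exact (mem_ball.1 (hsub hz)).le
  linarith [(hball z (hsub hz)).1, lt_of_abs_lt hclose]

lemma tendsto_gradient_of_pos (hmin : ∀ k, IsMinimizer Ω (u k)) (hR : 0 < R)
    (hΩ : closedBall x R ⊆ Ω) (huv : TendstoUniformlyOn u v atTop (closedBall x R))
    (hx : 0 < v x) : Tendsto (fun k => ∇ (u k) x) atTop (𝓝 (∇ v x)) := by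
  have hcont : ContinuousAt v x :=
    (huv.continuousOn (.of_forall fun k => (hmin k).2.1.continuous.continuousOn)).continuousAt
      (closedBall_mem_nhds x hR)
  obtain ⟨r, hr, hball⟩ := nhds_basis_closedBall.mem_iff.1
    (inter_mem (hcont.eventually (lt_mem_nhds (half_lt_self hx))) (closedBall_mem_nhds x hR))
  have hunif := huv.mono fun z hz => (hball hz).2
  refine tendsto_gradient_of_isWeaklyHarmonicOn hr (fun k => (hmin k).2.1) ?_ hunif
  filter_upwards [Metric.tendstoUniformlyOn_iff.1 hunif (v x / 2) (half_pos hx)] with k hk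
  refine (hmin k).isWeaklyHarmonicOn.mono fun z hz => ?_
  have hz := ball_subset_closedBall hz
  have hclose := hk z hz
  rw [Real.dist_eq] at hclose
  exact ⟨hΩ (hball hz).2, show 0 < u k z by
    linarith [show v x / 2 < v z from (hball hz).1, lt_of_abs_lt hclose]⟩

lemma eventually_pos_iff_and_tendsto_gradient (hmin : ∀ k, IsMinimizer Ω (u k)) (hR : 0 < R)
    (hΩ : closedBall x R ⊆ Ω) (hlip : ∀ k, LipschitzOnWith L (u k) (closedBall x R))
    (huv : TendstoUniformlyOn u v atTop (closedBall x R)) (hv : DifferentiableAt ℝ v x) :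
    (∀ᶠ k in atTop, 0 < u k x ↔ 0 < v x) ∧ Tendsto (fun k => ∇ (u k) x) atTop (𝓝 (∇ v x)) := by
  have hnonneg : ∀ z ∈ closedBall x R, 0 ≤ v z := fun z hz =>
    ge_of_tendsto' (huv.tendsto_at hz) fun k => (hmin k).1 z
  have hxR : x ∈ closedBall x R := mem_closedBall_self hR.le
  obtain hzero | hpos := (hnonneg x hxR).eq_or_lt'
  · have hlocmin : IsLocalMin v x :=
      mem_of_superset (closedBall_mem_nhds x hR) fun z hz => hzero.trans_le (hnonneg z hz)
    have hderiv : HasFDerivAt v (0 : EuclideanSpace ℝ (Fin n) →L[ℝ] ℝ) x :=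
      hlocmin.fderiv_eq_zero ▸ hv.hasFDerivAt
    have hev := eventually_eventuallyEq_zero_of_hasFDerivAt_zero hmin hR hΩ hlip huv hzero hderiv
    refine ⟨hev.mono fun k hk => by rw [hk.eq_of_nhds, hzero], tendsto_const_nhds.congr' ?_⟩
    filter_upwards [hev] with k hk
    rw [hk.gradient_eq, gradient_fun_const, gradient, hderiv.fderiv, map_zero]
  · exact ⟨(huv.tendsto_at hxR).eventually (lt_mem_nhds hpos) |>.mono fun _ hk =>
      iff_of_true hk hpos, tendsto_gradient_of_pos hmin hR hΩ huv hpos⟩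

lemma locallyLipschitzOn_of_tendsto (hΩ : IsOpen Ω)
    (hlip : ∀ K ⊆ Ω, IsCompact K → ∃ L : ℝ≥0, ∀ k, LipschitzOnWith L (u k) K)
    (hconv : ∀ x ∈ Ω, Tendsto (fun k => u k x) atTop (𝓝 (v x))) : LocallyLipschitzOn Ω v := by
  intro x hx
  obtain ⟨R, hR, hRΩ⟩ := nhds_basis_closedBall.mem_iff.1 (hΩ.mem_nhds hx)
  obtain ⟨L, hL⟩ := hlip _ hRΩ (isCompact_closedBall x R)
  exact ⟨L, closedBall x R, mem_nhdsWithin_of_mem_nhds (closedBall_mem_nhds x hR),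
    lipschitzOnWith_of_tendsto hL fun z hz => hconv z (hRΩ hz)⟩

lemma ae_eventually_pos_iff_and_tendsto_gradient (hΩ : IsOpen Ω)
    (hmin : ∀ k, IsMinimizer Ω (u k))
    (hlip : ∀ K ⊆ Ω, IsCompact K → ∃ L : ℝ≥0, ∀ k, LipschitzOnWith L (u k) K)
    (hconv : ∀ x ∈ Ω, Tendsto (fun k => u k x) atTop (𝓝 (v x))) :
    ∀ᵐ x ∂(volume.restrict Ω), (∀ᶠ k in atTop, 0 < u k x ↔ 0 < v x) ∧
      Tendsto (fun k => ∇ (u k) x) atTop (𝓝 (∇ v x)) := by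
  rw [ae_restrict_iff' hΩ.measurableSet]
  filter_upwards [ae_differentiableAt_of_locallyLipschitzOn hΩ
    (locallyLipschitzOn_of_tendsto hΩ hlip hconv)] with x hdiff hx
  obtain ⟨R, hR, hRΩ⟩ := nhds_basis_closedBall.mem_iff.1 (hΩ.mem_nhds hx)
  have hK : IsCompact (closedBall x R) := isCompact_closedBall x R
  obtain ⟨L, hL⟩ := hlip _ hRΩ hK
  exact eventually_pos_iff_and_tendsto_gradient hmin hR hRΩ hL
    (tendstoUniformlyOn_of_lipschitzOnWith hK hL fun z hz => hconv z (hRΩ hz)) (hdiff hx)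

end Compactness

theorem stmt8_general {n : ℕ} (Ω : Set (EuclideanSpace ℝ (Fin n))) (hΩ : IsOpen Ω)
    (u : ℕ → EuclideanSpace ℝ (Fin n) → ℝ)
    (hmin : ∀ k, IsMinimizer Ω (u k))
    (hlip : ∀ K : Set (EuclideanSpace ℝ (Fin n)), K ⊆ Ω → IsCompact K →
      ∃ L : ℝ≥0, ∀ k, LipschitzOnWith L (u k) K)
    (v : EuclideanSpace ℝ (Fin n) → ℝ)
    (hconv : ∀ x ∈ Ω, Tendsto (fun k => u k x) atTop (𝓝 (v x))) :
    (∀ K : Set (EuclideanSpace ℝ (Fin n)), IsCompact K → K ⊆ Ω →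
      Tendsto (fun k => ∫ x in K,
          |(if 0 < u k x then (1 : ℝ) else 0) - (if 0 < v x then (1 : ℝ) else 0)|)
        atTop (𝓝 0)) ∧
    (∀ᵐ x ∂(volume.restrict Ω), Tendsto (fun k => ∇ (u k) x) atTop (𝓝 (∇ v x))) := by
  have hae := ae_eventually_pos_iff_and_tendsto_gradient hΩ hmin hlip hconv
  refine ⟨fun K hK hKΩ => ?_, hae.mono fun x hx => hx.2⟩
  have hvK : ContinuousOn v K :=
    (locallyLipschitzOn_of_tendsto hΩ hlip hconv).continuousOn.mono hKΩ
  exact tendsto_setIntegral_abs_pos_sub_pos hK.measure_lt_top.ne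
    (fun k => (hmin k).2.1.continuous.aemeasurable) (hvK.aemeasurable hK.measurableSet)
    ((ae_restrict_of_ae_restrict_of_subset hKΩ hae).mono fun x hx => hx.1)

/-- compactness of minimizers — convergence of the positivity indicators in
`L¹_loc` and a.e. convergence of the gradients. -/
theorem stmt8 {n : ℕ} (hn : 2 ≤ n) (Ω : Set (EuclideanSpace ℝ (Fin n))) (hΩ : IsOpen Ω)
    (u : ℕ → EuclideanSpace ℝ (Fin n) → ℝ)
    (hmin : ∀ k, IsMinimizer Ω (u k))
    (hlip : ∀ K : Set (EuclideanSpace ℝ (Fin n)), IsCompact K →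
      ∃ L : ℝ≥0, ∀ k, LipschitzOnWith L (u k) K)
    (v : EuclideanSpace ℝ (Fin n) → ℝ)
    (hconv : ∀ x, Tendsto (fun k => u k x) atTop (nhds (v x))) :
    (∀ K : Set (EuclideanSpace ℝ (Fin n)), IsCompact K → K ⊆ Ω →
      Tendsto (fun k => ∫ x in K,
          |(if 0 < u k x then (1 : ℝ) else 0) - (if 0 < v x then (1 : ℝ) else 0)|)
        atTop (nhds 0)) ∧
    (∀ᵐ x ∂(volume.restrict Ω),
      Tendsto (fun k => gradient (u k) x) atTop (nhds (gradient v x))) :=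
  stmt8_general Ω hΩ u hmin (fun K _ hK => hlip K hK) v fun x _ => hconv x
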